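/- For any Borel probability measures μ and ν on X and any p ≥ 1, the (p,0)-RPW distance equals the total variation distance: RPW_{p,0}(μ, ν) = ‖μ − ν‖_TV. -/

import Mathlib

open MeasureTheory

noncomputable section

/-- `γ` is an `α`-partial transport plan from `μ` to `ν`: a Borel measure on `X × X` of
total mass `α` whose first marginal is dominated by `μ` and second marginal by `ν`. -/
def IsPartialPlan {X : Type*} [MeasurableSpace X] (μ ν : Measure X) (α : ℝ)
    (γ : Measure (X × X)) : Prop :=
  γ Set.univ = ENNReal.ofReal α ∧ γ.map Prod.fst ≤ μ ∧ γ.map Prod.snd ≤ ν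

/-- The cost `w_p(γ) = (∫ c(x,y)^p dγ)^(1/p)` of a transport plan. -/
def planCost {X : Type*} [MetricSpace X] [MeasurableSpace X] (p : ℝ)
    (γ : Measure (X × X)) : ℝ :=
  (∫ z, dist z.1 z.2 ^ p ∂γ) ^ (1 / p)

/-- The `α`-partial `p`-Wasserstein distance `W_{p,α}(μ, ν)`. -/
def partialW {X : Type*} [MetricSpace X] [MeasurableSpace X] (p α : ℝ)
    (μ ν : Measure X) : ℝ :=
  sInf { c : ℝ | ∃ γ : Measure (X × X), IsPartialPlan μ ν α γ ∧ c = planCost p γ }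

/-- The `(p,k)`-RPW distance: the least `ε ∈ [0,1]` with `W_{p,1-ε}(μ,ν) ≤ kε`. -/
def RPW {X : Type*} [MetricSpace X] [MeasurableSpace X] (p k : ℝ)
    (μ ν : Measure X) : ℝ :=
  sInf { ε : ℝ | ε ∈ Set.Icc (0:ℝ) 1 ∧ partialW p (1 - ε) μ ν ≤ k * ε }

/-- The total variation distance `‖μ − ν‖_TV = sup { |μ(A) − ν(A)| : A Borel }`. -/
def TVdist {X : Type*} [MeasurableSpace X] (μ ν : Measure X) : ℝ :=
  sSup { r : ℝ | ∃ A : Set X, MeasurableSet A ∧ r = |(μ A).toReal - (ν A).toReal| }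

/-!
The greatest common lower bound `μ ⊓ ν` has total mass `1 - ‖μ - ν‖_TV`. Pushed forward to the
diagonal, it is a partial plan of that mass and of cost zero, so `ε = ‖μ - ν‖_TV` is admissible in
the infimum defining `RPW p 0`.

Conversely, a partial plan of mass `α` and small cost moves little mass further than `t`
(Markov's inequality), whence
`μ(A) ≤ ν(A_t) + (1 - α) + (W_{p,α}(μ, ν) / t) ^ p` for the `t`-thickening `A_t` of `A`. If
`W_{p,1-ε}(μ, ν) = 0`, letting `t → 0` gives `μ(A) ≤ ν(A) + ε` for closed `A`, and then for Borel
`A` by regularity of `μ`; hence `‖μ - ν‖_TV ≤ ε`.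
-/

section TotalVariation

variable {X : Type*} [MeasurableSpace X] {μ ν : Measure X} {A : Set X}

theorem TVdist_nonneg : 0 ≤ TVdist μ ν := by
  refine Real.sSup_nonneg ?_
  rintro _ ⟨A, -, rfl⟩
  exact abs_nonneg _

theorem abs_measureReal_sub_le_TVdist [IsFiniteMeasure μ] [IsFiniteMeasure ν]
    (hA : MeasurableSet A) : |μ.real A - ν.real A| ≤ TVdist μ ν := by
  refine le_csSup ⟨max (μ.real Set.univ) (ν.real Set.univ), ?_⟩ ⟨A, hA, rfl⟩
  rintro _ ⟨B, -, rfl⟩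
  exact abs_sub_le_of_nonneg_of_le
    measureReal_nonneg ((measureReal_mono B.subset_univ).trans (le_max_left _ _))
    measureReal_nonneg ((measureReal_mono B.subset_univ).trans (le_max_right _ _))

variable [IsProbabilityMeasure μ] [IsProbabilityMeasure ν]

theorem TVdist_le {ε : ℝ} (h : ∀ A, MeasurableSet A → μ.real A ≤ ν.real A + ε) :
    TVdist μ ν ≤ ε := by
  refine csSup_le ⟨_, ∅, .empty, rfl⟩ ?_
  rintro _ ⟨A, hA, rfl⟩
  have hcompl := h Aᶜ hA.compl
  rw [probReal_compl_eq_one_sub hA, probReal_compl_eq_one_sub hA] at hcompl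
  change |μ.real A - ν.real A| ≤ ε
  exact abs_sub_le_iff.2 ⟨by linarith [h A hA], by linarith⟩

theorem TVdist_le_one : TVdist μ ν ≤ 1 :=
  TVdist_le fun _ _ ↦ measureReal_le_one.trans (le_add_of_nonneg_left measureReal_nonneg)

theorem one_sub_TVdist_le_measureReal_add_compl (hA : MeasurableSet A) :
    1 - TVdist μ ν ≤ μ.real A + ν.real Aᶜ := by
  have hA' := (abs_sub_le_iff.1 (abs_measureReal_sub_le_TVdist (μ := μ) (ν := ν) hA)).2
  rw [probReal_compl_eq_one_sub hA]
  linarith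

theorem measureReal_inf_univ : (μ ⊓ ν).real Set.univ = 1 - TVdist μ ν := by
  have := isFiniteMeasure_of_le μ (inf_le_left : μ ⊓ ν ≤ μ)
  refine le_antisymm (le_sub_comm.1 (TVdist_le fun A hA ↦ ?_)) ?_
  · have hleft : (μ ⊓ ν).real Aᶜ ≤ μ.real Aᶜ :=
      ENNReal.toReal_mono (measure_ne_top _ _) ((inf_le_left : μ ⊓ ν ≤ μ) Aᶜ)
    have hright : (μ ⊓ ν).real A ≤ ν.real A :=
      ENNReal.toReal_mono (measure_ne_top _ _) ((inf_le_right : μ ⊓ ν ≤ ν) A)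
    linarith [measureReal_add_measureReal_compl (μ := μ ⊓ ν) hA,
      probReal_compl_eq_one_sub (μ := μ) hA]
  · refine (ENNReal.ofReal_le_iff_le_toReal (measure_ne_top _ _)).1 ?_
    rw [Measure.inf_apply .univ]
    refine le_sInf ?_
    rintro _ ⟨A, rfl⟩
    -- `Measure.inf_apply` ranges over all sets, so pass to a measurable hull of `A`.
    have hB : MeasurableSet (toMeasurable μ A) := measurableSet_toMeasurable μ A
    calc ENNReal.ofReal (1 - TVdist μ ν)
        ≤ μ (toMeasurable μ A) + ν (toMeasurable μ A)ᶜ := by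
          refine ENNReal.ofReal_le_of_le_toReal ?_
          rw [ENNReal.toReal_add (measure_ne_top _ _) (measure_ne_top _ _)]
          exact one_sub_TVdist_le_measureReal_add_compl hB
      _ ≤ μ (A ∩ Set.univ) + ν (Aᶜ ∩ Set.univ) := by
          rw [measure_toMeasurable, Set.inter_univ, Set.inter_univ]
          gcongr
          exact subset_toMeasurable μ A

end TotalVariation

theorem measureReal_le_add_of_forall_isClosed {X : Type*} [TopologicalSpace X] [MeasurableSpace X]
    {μ ν : Measure X} [IsFiniteMeasure μ] [IsFiniteMeasure ν] [μ.WeaklyRegular] {ε : ℝ}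
    (h : ∀ K, IsClosed K → μ.real K ≤ ν.real K + ε) {A : Set X} (hA : MeasurableSet A) :
    μ.real A ≤ ν.real A + ε := by
  refine le_of_forall_pos_le_add fun η hη ↦ ?_
  obtain ⟨K, hKA, hK, hlt⟩ := hA.exists_isClosed_lt_add (measure_ne_top μ A)
    (ENNReal.ofReal_pos.2 hη).ne'
  have hAK : μ.real A ≤ μ.real K + η := by
    simpa [Measure.real, ENNReal.toReal_add, hη.le] using ENNReal.toReal_mono (by finiteness) hlt.le
  calc μ.real A ≤ μ.real K + η := hAK
    _ ≤ ν.real K + ε + η := by gcongr; exact h K hK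
    _ ≤ ν.real A + ε + η := by gcongr; exact measure_ne_top ν A

section PartialPlan

variable {X : Type*} [MeasurableSpace X] {μ ν : Measure X} {α : ℝ} {γ : Measure (X × X)}

namespace IsPartialPlan

theorem isFiniteMeasure (h : IsPartialPlan μ ν α γ) : IsFiniteMeasure γ :=
  ⟨h.1 ▸ ENNReal.ofReal_lt_top⟩

theorem le_measureReal_univ (h : IsPartialPlan μ ν α γ) : α ≤ γ.real Set.univ := by
  rw [Measure.real, h.1, ENNReal.toReal_ofReal']
  exact le_max_left _ _

theorem measureReal_fst_preimage_le [IsFiniteMeasure μ] (h : IsPartialPlan μ ν α γ) (A : Set X) :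
    γ.real (Prod.fst ⁻¹' A) ≤ μ.real A :=
  ENNReal.toReal_mono (measure_ne_top _ _)
    ((Measure.le_map_apply measurable_fst.aemeasurable A).trans (h.2.1 A))

theorem measureReal_snd_preimage_le [IsFiniteMeasure ν] (h : IsPartialPlan μ ν α γ) (A : Set X) :
    γ.real (Prod.snd ⁻¹' A) ≤ ν.real A :=
  ENNReal.toReal_mono (measure_ne_top _ _)
    ((Measure.le_map_apply measurable_snd.aemeasurable A).trans (h.2.2 A))

theorem measureReal_le_add_prod_compl [IsFiniteMeasure μ] [IsFiniteMeasure ν]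
    (h : IsPartialPlan μ ν α γ) {A : Set X} (hA : MeasurableSet A) (B : Set X) :
    μ.real A ≤ ν.real B + (μ.real Set.univ - α) + γ.real (A ×ˢ Bᶜ) := by
  have := h.isFiniteMeasure
  have hcover : (Set.univ : Set (X × X)) ⊆ Prod.fst ⁻¹' Aᶜ ∪ (Prod.snd ⁻¹' B ∪ A ×ˢ Bᶜ) := by
    rintro ⟨x, y⟩ -
    by_cases hx : x ∈ A <;> by_cases hy : y ∈ B <;> simp [hx, hy]
  have hα : α ≤ μ.real Aᶜ + (ν.real B + γ.real (A ×ˢ Bᶜ)) :=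
    calc α ≤ γ.real Set.univ := h.le_measureReal_univ
      _ ≤ γ.real (Prod.fst ⁻¹' Aᶜ ∪ (Prod.snd ⁻¹' B ∪ A ×ˢ Bᶜ)) := measureReal_mono hcover
      _ ≤ γ.real (Prod.fst ⁻¹' Aᶜ) + (γ.real (Prod.snd ⁻¹' B) + γ.real (A ×ˢ Bᶜ)) :=
        (measureReal_union_le _ _).trans (by gcongr; exact measureReal_union_le _ _)
      _ ≤ μ.real Aᶜ + (ν.real B + γ.real (A ×ˢ Bᶜ)) := by
        gcongr
        · exact h.measureReal_fst_preimage_le Aᶜ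
        · exact h.measureReal_snd_preimage_le B
  linarith [measureReal_add_measureReal_compl (μ := μ) hA]

end IsPartialPlan

theorem isPartialPlan_smul_prod [IsProbabilityMeasure μ] [IsProbabilityMeasure ν] (hα : α ≤ 1) :
    IsPartialPlan μ ν α (ENNReal.ofReal α • μ.prod ν) := by
  have hα' : ENNReal.ofReal α ≤ 1 := ENNReal.ofReal_le_one.2 hα
  refine ⟨by simp, ?_, ?_⟩
  · rw [Measure.map_smul, Measure.map_fst_prod, measure_univ, one_smul]
    exact fun A ↦ mul_le_of_le_one_left' hα'
  · rw [Measure.map_smul, Measure.map_snd_prod, measure_univ, one_smul]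
    exact fun A ↦ mul_le_of_le_one_left' hα'

theorem isPartialPlan_map_diag {ρ : Measure X} [IsFiniteMeasure ρ] (hμ : ρ ≤ μ) (hν : ρ ≤ ν) :
    IsPartialPlan μ ν (ρ.real Set.univ) (ρ.map fun x ↦ (x, x)) := by
  have hdiag : Measurable fun x : X ↦ (x, x) := by fun_prop
  refine ⟨?_, ?_, ?_⟩
  · rw [Measure.map_apply hdiag .univ, Set.preimage_univ, ofReal_measureReal]
  · rw [Measure.map_map measurable_fst hdiag]
    exact Measure.map_id.trans_le hμ
  · rw [Measure.map_map measurable_snd hdiag]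
    exact Measure.map_id.trans_le hν

end PartialPlan

section Cost

variable {X : Type*} [MetricSpace X] [MeasurableSpace X] {μ ν : Measure X} {p α : ℝ}
  {γ : Measure (X × X)}

theorem planCost_nonneg : 0 ≤ planCost p γ :=
  Real.rpow_nonneg (integral_nonneg fun _ ↦ Real.rpow_nonneg dist_nonneg _) _

theorem planCost_rpow (hp : p ≠ 0) : planCost p γ ^ p = ∫ z, dist z.1 z.2 ^ p ∂γ := by
  rw [planCost, one_div]
  exact Real.rpow_inv_rpow (integral_nonneg fun _ ↦ Real.rpow_nonneg dist_nonneg _) hp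

theorem partialW_nonneg : 0 ≤ partialW p α μ ν := by
  refine Real.sInf_nonneg ?_
  rintro _ ⟨γ, -, rfl⟩
  exact planCost_nonneg

theorem IsPartialPlan.partialW_le (h : IsPartialPlan μ ν α γ) :
    partialW p α μ ν ≤ planCost p γ := by
  refine csInf_le ⟨0, ?_⟩ ⟨γ, h, rfl⟩
  rintro _ ⟨γ', -, rfl⟩
  exact planCost_nonneg

theorem exists_planCost_lt_of_partialW_lt [IsProbabilityMeasure μ] [IsProbabilityMeasure ν]
    (hα : α ≤ 1) {c : ℝ} (hc : partialW p α μ ν < c) :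
    ∃ γ, IsPartialPlan μ ν α γ ∧ planCost p γ < c := by
  have hne : {c | ∃ γ, IsPartialPlan μ ν α γ ∧ c = planCost p γ}.Nonempty :=
    ⟨_, _, isPartialPlan_smul_prod hα, rfl⟩
  obtain ⟨_, ⟨γ, hγ, rfl⟩, hlt⟩ := exists_lt_of_csInf_lt hne hc
  exact ⟨γ, hγ, hlt⟩

theorem measureReal_le_dist_le (hp : 0 < p) (hγ : Integrable (fun z ↦ dist z.1 z.2 ^ p) γ)
    {t : ℝ} (ht : 0 < t) : γ.real {z | t ≤ dist z.1 z.2} ≤ (planCost p γ / t) ^ p := by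
  have hmarkov := mul_meas_ge_le_integral_of_nonneg
    (.of_forall fun _ ↦ Real.rpow_nonneg dist_nonneg _) hγ (t ^ p)
  simp only [Real.rpow_le_rpow_iff ht.le dist_nonneg hp] at hmarkov
  rwa [Real.div_rpow planCost_nonneg ht.le, planCost_rpow hp.ne',
    le_div_iff₀' (Real.rpow_pos_of_pos ht p)]

theorem IsPartialPlan.measureReal_le_thickening_add_planCost [IsFiniteMeasure μ]
    [IsFiniteMeasure ν] (h : IsPartialPlan μ ν α γ) (hp : 0 < p)
    (hγ : Integrable (fun z ↦ dist z.1 z.2 ^ p) γ) {t : ℝ} (ht : 0 < t)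
    {A : Set X} (hA : MeasurableSet A) :
    μ.real A ≤
      ν.real (Metric.thickening t A) + (μ.real Set.univ - α) + (planCost p γ / t) ^ p := by
  have := h.isFiniteMeasure
  have hfar : A ×ˢ (Metric.thickening t A)ᶜ ⊆ {z | t ≤ dist z.1 z.2} := fun z hz ↦
    not_lt.1 fun hlt ↦ hz.2 (Metric.mem_thickening_iff.2 ⟨z.1, hz.1, by rwa [dist_comm]⟩)
  refine (h.measureReal_le_add_prod_compl hA (Metric.thickening t A)).trans ?_
  gcongr
  exact (measureReal_mono hfar).trans (measureReal_le_dist_le hp hγ ht)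

section Separable

variable [OpensMeasurableSpace X] [SecondCountableTopology X]

theorem partialW_eq_zero_of_le (hp : p ≠ 0) {ρ : Measure X} [IsFiniteMeasure ρ]
    (hμ : ρ ≤ μ) (hν : ρ ≤ ν) : partialW p (ρ.real Set.univ) μ ν = 0 := by
  have hcost : planCost p (ρ.map fun x ↦ (x, x)) = 0 := by
    rw [planCost, integral_map (by fun_prop)
      ((measurable_fst.dist measurable_snd).pow_const p).aestronglyMeasurable]
    simp [Real.zero_rpow hp, Real.zero_rpow (inv_ne_zero hp)]
  exact ((isPartialPlan_map_diag hμ hν).partialW_le.trans_eq hcost).antisymm partialW_nonneg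

theorem IsPartialPlan.integrable_dist_rpow (h : IsPartialPlan μ ν α γ) (hp : 0 < p) {x₀ : X}
    (hμ : MemLp (dist · x₀) (.ofReal p) μ) (hν : MemLp (dist · x₀) (.ofReal p) ν) :
    Integrable (fun z ↦ dist z.1 z.2 ^ p) γ := by
  have hfst : MemLp (fun z : X × X ↦ dist z.1 x₀) (.ofReal p) γ :=
    (hμ.mono_measure h.2.1).comp_of_map measurable_fst.aemeasurable
  have hsnd : MemLp (fun z : X × X ↦ dist z.2 x₀) (.ofReal p) γ :=
    (hν.mono_measure h.2.2).comp_of_map measurable_snd.aemeasurable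
  have hdist : MemLp (fun z : X × X ↦ dist z.1 z.2) (.ofReal p) γ := by
    refine (hfst.add hsnd).mono (measurable_fst.dist measurable_snd).aestronglyMeasurable
      (.of_forall fun z ↦ ?_)
    rw [Real.norm_of_nonneg dist_nonneg]
    exact (dist_triangle_right z.1 z.2 x₀).trans (Real.le_norm_self _)
  simpa [hp.le] using hdist.integrable_norm_rpow (by simpa using hp) ENNReal.ofReal_ne_top

variable [IsProbabilityMeasure μ] [IsProbabilityMeasure ν] {x₀ : X}

theorem measureReal_le_thickening_add_partialW (hp : 0 < p) (hα : α ≤ 1)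
    (hμ : MemLp (dist · x₀) (.ofReal p) μ) (hν : MemLp (dist · x₀) (.ofReal p) ν)
    {t : ℝ} (ht : 0 < t) {A : Set X} (hA : MeasurableSet A) :
    μ.real A ≤ ν.real (Metric.thickening t A) + (1 - α) + (partialW p α μ ν / t) ^ p := by
  have hcont : Continuous fun c : ℝ ↦ ν.real (Metric.thickening t A) + (1 - α) + (c / t) ^ p :=
    continuous_const.add ((continuous_id.div_const t).rpow_const fun _ ↦ .inr hp.le)
  refine ge_of_tendsto (hcont.continuousWithinAt (s := Set.Ioi (partialW p α μ ν))) ?_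
  filter_upwards [self_mem_nhdsWithin] with c hc
  obtain ⟨γ, hγ, hlt⟩ := exists_planCost_lt_of_partialW_lt hα hc
  have hle := hγ.measureReal_le_thickening_add_planCost hp (hγ.integrable_dist_rpow hp hμ hν) ht hA
  rw [probReal_univ] at hle
  refine hle.trans ?_
  have := planCost_nonneg (p := p) (γ := γ)
  gcongr

theorem measureReal_le_add_of_partialW_eq_zero_of_isClosed (hp : 0 < p) (hα : α ≤ 1)
    (hμ : MemLp (dist · x₀) (.ofReal p) μ) (hν : MemLp (dist · x₀) (.ofReal p) ν)
    (hW : partialW p α μ ν = 0) {K : Set X} (hK : IsClosed K) :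
    μ.real K ≤ ν.real K + (1 - α) := by
  have hlim := (ENNReal.tendsto_toReal (measure_ne_top ν K)).comp
    (tendsto_measure_thickening_of_isClosed ⟨1, one_pos, measure_ne_top _ _⟩ hK)
  refine ge_of_tendsto (hlim.add_const (1 - α)) ?_
  filter_upwards [self_mem_nhdsWithin] with t ht
  have hle := measureReal_le_thickening_add_partialW hp hα hμ hν ht hK.measurableSet
  rwa [hW, zero_div, Real.zero_rpow hp.ne', add_zero] at hle

end Separable

theorem TVdist_le_of_partialW_eq_zero [BorelSpace X] [SecondCountableTopology X]
    [IsProbabilityMeasure μ] [IsProbabilityMeasure ν] (hp : 0 < p) (hα : α ≤ 1) {x₀ : X}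
    (hμ : MemLp (dist · x₀) (.ofReal p) μ) (hν : MemLp (dist · x₀) (.ofReal p) ν)
    (hW : partialW p α μ ν = 0) : TVdist μ ν ≤ 1 - α :=
  TVdist_le fun _ ↦ measureReal_le_add_of_forall_isClosed fun _ ↦
    measureReal_le_add_of_partialW_eq_zero_of_isClosed hp hα hμ hν hW

theorem partialW_one_sub_TVdist [OpensMeasurableSpace X] [SecondCountableTopology X]
    [IsProbabilityMeasure μ] [IsProbabilityMeasure ν] (hp : p ≠ 0) :
    partialW p (1 - TVdist μ ν) μ ν = 0 := by
  have := isFiniteMeasure_of_le μ (inf_le_left : μ ⊓ ν ≤ μ)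
  rw [← measureReal_inf_univ]
  exact partialW_eq_zero_of_le hp inf_le_left inf_le_right

end Cost

theorem memLp_dist_of_dist_le {X : Type*} [PseudoMetricSpace X] [MeasurableSpace X]
    [OpensMeasurableSpace X] {μ : Measure X} [IsFiniteMeasure μ] {C : ℝ} {x₀ : X}
    (h : ∀ x, dist x x₀ ≤ C) (q : ENNReal) : MemLp (dist · x₀) q μ :=
  memLp_of_bounded (.of_forall fun x ↦ ⟨dist_nonneg, h x⟩)
    (continuous_id.dist continuous_const).aestronglyMeasurable q

theorem rpw_zero_eq_tv_general {X : Type*} [MetricSpace X] [SecondCountableTopology X]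
    [MeasurableSpace X] [BorelSpace X] (μ ν : Measure X) [IsProbabilityMeasure μ]
    [IsProbabilityMeasure ν] {p : ℝ} (hp : 0 < p) {x₀ : X}
    (hμ : MemLp (dist · x₀) (.ofReal p) μ) (hν : MemLp (dist · x₀) (.ofReal p) ν) :
    RPW p 0 μ ν = TVdist μ ν := by
  refine IsLeast.csInf_eq ⟨⟨⟨TVdist_nonneg, TVdist_le_one⟩, ?_⟩, ?_⟩
  · rw [partialW_one_sub_TVdist hp.ne', zero_mul]
  · rintro ε ⟨⟨hε, -⟩, hW⟩
    have hW₀ : partialW p (1 - ε) μ ν = 0 := (hW.trans_eq (zero_mul ε)).antisymm partialW_nonneg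
    simpa using TVdist_le_of_partialW_eq_zero hp (sub_le_self 1 hε) hμ hν hW₀

/-- For any Borel probability measures `μ, ν` and `p ≥ 1`, the
`(p,0)`-RPW distance equals the total variation distance. -/
theorem rpw_zero_eq_tv
    {X : Type*} [MetricSpace X] [CompactSpace X] [MeasurableSpace X] [BorelSpace X]
    (hdiam : ∀ a b : X, dist a b ≤ 1)
    (μ ν : Measure X) [IsProbabilityMeasure μ] [IsProbabilityMeasure ν]
    (p : ℝ) (hp : 1 ≤ p) :
    RPW p 0 μ ν = TVdist μ ν := by
  obtain ⟨x₀⟩ := nonempty_of_isProbabilityMeasure μ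
  exact rpw_zero_eq_tv_general μ ν (zero_lt_one.trans_le hp)
    (memLp_dist_of_dist_le (hdiam · x₀) _) (memLp_dist_of_dist_le (hdiam · x₀) _)
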